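/- Let X_star ∈ R^{n₁×n₂} be a rank-r matrix with compact SVD U_star·Σ_star·V_star^T and condition number κ = σ₁(X_star)/σ_r(X_star). Let A be a linear map obeying the rank-2r restricted isometry property with constant δ: for all M of rank at most 2r, (1−δ)‖M‖_F² ≤ ‖A(M)‖₂² ≤ (1+δ)‖M‖_F². Let L₀R₀^T be the best rank-r approximation (truncated SVD) of A*(A(X_star)), normalized so that L₀ = U₀Σ₀^{1/2}, R₀ = V₀Σ₀^{1/2}. Then dist(F₀, F_star) ≤ 5·δ·√r·κ·σ_r(X_star), where dist(F₀,F_star) = inf_{Q ∈ GL(r)} sqrt(‖(L₀Q − L_star)Σ_star^{1/2}‖_F² + ‖(R₀Q^{-T} − R_star)Σ_star^{1/2}‖_F²) with L_star = U_starΣ_star^{1/2}, R_star = V_starΣ_star^{1/2}. -/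

import Mathlib

/-!
Stack the factors as `F = [L; R]` and `G = [Lstar; Rstar]`. Multiplying `F` on the right by an
orthogonal polar factor of `Gᵀ F` makes `Gᵀ F` positive semidefinite, and then an algebraic identity
bounds `‖(F - G) Gᵀ‖` by a multiple of `‖F Fᵀ - G Gᵀ‖`. Both pairs of factors are balanced
(`Lᵀ L = Rᵀ R`), so the latter is at most `2 ‖L Rᵀ - Lstar Rstarᵀ‖`, while `Gᵀ G = 2 Σ_star` turns
the former into the scaled distance. On the other hand, `Y = 𝓐*(𝓐(X_star))` is at least as near to
`L₀ R₀ᵀ` as to `X_star`, which gives `‖D‖² ≤ 2 ⟨Y - X_star, D⟩` for `D = L₀ R₀ᵀ - X_star`. The right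
side is twice `⟨𝓐 X_star, 𝓐 D⟩ - ⟨X_star, D⟩`; as every combination of `X_star` and `D` has rank at
most `2r`, the restricted isometry property bounds it by `2 δ ‖X_star‖ ‖D‖`.
-/

open Matrix

/-- Frobenius norm of a real matrix. -/
noncomputable def frob {n₁ n₂ : ℕ} (A : Matrix (Fin n₁) (Fin n₂) ℝ) : ℝ :=
  Real.sqrt (∑ i, ∑ j, (A i j) ^ 2)

/-- The scaled distance `dist(F, F_star)`: the infimum over invertible `Q` of
`sqrt(‖(LQ − L_star)Σ_star^{1/2}‖_F² + ‖(RQ^{-T} − R_star)Σ_star^{1/2}‖_F²)`,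
where `Σ_star = diagonal σ`. -/
noncomputable def distF {n₁ n₂ r : ℕ}
    (L : Matrix (Fin n₁) (Fin r) ℝ) (R : Matrix (Fin n₂) (Fin r) ℝ)
    (Lstar : Matrix (Fin n₁) (Fin r) ℝ) (Rstar : Matrix (Fin n₂) (Fin r) ℝ)
    (σ : Fin r → ℝ) : ℝ :=
  sInf {c : ℝ | ∃ Q : Matrix (Fin r) (Fin r) ℝ, IsUnit Q ∧
    c = Real.sqrt
      ((frob ((L * Q - Lstar) * Matrix.diagonal (fun i => Real.sqrt (σ i)))) ^ 2 +
       (frob ((R * (Q⁻¹)ᵀ - Rstar) * Matrix.diagonal (fun i => Real.sqrt (σ i)))) ^ 2)}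

section IsometricFactor

variable {𝕜 V E : Type*} [RCLike 𝕜] [AddCommGroup V] [Module 𝕜 V] [NormedAddCommGroup E]
  [InnerProductSpace 𝕜 E] [FiniteDimensional 𝕜 E]

theorem exists_linearIsometry_comp_eq_of_norm_eq (f g : V →ₗ[𝕜] E) (h : ∀ x, ‖f x‖ = ‖g x‖) :
    ∃ U : E →ₗᵢ[𝕜] E, U.toLinearMap ∘ₗ f = g := by
  have hker : f.ker ≤ g.ker := fun x hx => by
    rw [LinearMap.mem_ker, ← norm_eq_zero] at hx ⊢
    rw [← h x, hx]
  let φ : f.range →ₗ[𝕜] E := f.ker.liftQ g hker ∘ₗ f.quotKerEquivRange.symm.toLinearMap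
  have hφ (x : V) : φ ⟨f x, f.mem_range_self x⟩ = g x := by
    simp only [φ, LinearMap.comp_apply, LinearEquiv.coe_coe,
      LinearMap.quotKerEquivRange_symm_apply_image, Submodule.mkQ_apply, Submodule.liftQ_apply]
  let Φ : f.range →ₗᵢ[𝕜] E := ⟨φ, by rintro ⟨_, x, rfl⟩; rw [hφ, ← h x]; rfl⟩
  exact ⟨Φ.extend, LinearMap.ext fun x => (Φ.extend_apply ⟨f x, f.mem_range_self x⟩).trans (hφ x)⟩

end IsometricFactor

section Polar

variable {𝕜 n : Type*} [RCLike 𝕜] [Fintype n] [DecidableEq n]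

theorem exists_mem_unitaryGroup_mul_eq_of_conjTranspose_mul_self_eq {A B : Matrix n n 𝕜}
    (h : Aᴴ * A = Bᴴ * B) : ∃ U ∈ unitaryGroup n 𝕜, U * A = B := by
  let T := toEuclideanCLM (n := n) (𝕜 := 𝕜)
  have hadj : star (T A) * T A = star (T B) * T B := by
    simpa only [← star_eq_conjTranspose, map_mul, map_star] using congrArg T h
  have hnorm (x : EuclideanSpace 𝕜 n) : ‖T A x‖ = ‖T B x‖ := by
    rw [(T A).apply_norm_eq_sqrt_inner_adjoint_left, (T B).apply_norm_eq_sqrt_inner_adjoint_left]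
    exact congrArg (fun S => √(RCLike.re (inner 𝕜 (S x) x))) hadj
  obtain ⟨U, hU⟩ :=
    exists_linearIsometry_comp_eq_of_norm_eq (T A).toLinearMap (T B).toLinearMap hnorm
  obtain ⟨W, hW⟩ := EquivLike.surjective T U.toContinuousLinearMap
  refine ⟨W, mem_unitaryGroup_iff'.2 (EquivLike.injective T ?_), EquivLike.injective T ?_⟩
  · rw [map_mul, map_star, map_one, hW]
    exact (ContinuousLinearMap.norm_map_iff_adjoint_comp_self _).1 U.norm_map
  · rw [map_mul, hW]
    ext1 x
    exact LinearMap.congr_fun hU x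

open scoped ComplexOrder MatrixOrder Matrix.Norms.L2Operator in
theorem exists_mem_unitaryGroup_mul_posSemidef (M : Matrix n n 𝕜) :
    ∃ Q ∈ unitaryGroup n 𝕜, (M * Q).PosSemidef := by
  have habs : (CFC.abs M).PosSemidef := (CFC.abs_nonneg M).posSemidef
  obtain ⟨U, hU, hUM⟩ : ∃ U ∈ unitaryGroup n 𝕜, U * CFC.abs M = M :=
    exists_mem_unitaryGroup_mul_eq_of_conjTranspose_mul_self_eq <| by
      rw [habs.isHermitian.eq, CFC.abs_mul_abs, star_eq_conjTranspose]
  refine ⟨Uᴴ, Unitary.star_mem hU, ?_⟩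
  rw [← hUM]
  exact habs.mul_mul_conjTranspose_same U

end Polar

section RestrictedIsometry

open scoped InnerProductSpace

variable {E F : Type*} [NormedAddCommGroup E] [InnerProductSpace ℝ E] [NormedAddCommGroup F]
  [InnerProductSpace ℝ F]

/-- The restricted isometry property with constant `δ`, relative to an arbitrary set `S` in place of
the usual set of sparse vectors or low-rank matrices. -/
def RestrictedIsometryOn (A : E →ₗ[ℝ] F) (δ : ℝ) (S : Set E) : Prop :=
  ∀ z ∈ S, (1 - δ) * ‖z‖ ^ 2 ≤ ‖A z‖ ^ 2 ∧ ‖A z‖ ^ 2 ≤ (1 + δ) * ‖z‖ ^ 2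

namespace RestrictedIsometryOn

variable {A : E →ₗ[ℝ] F} {δ : ℝ} {x y : E}

lemma abs_norm_sq_sub_norm_sq_le {S : Set E} (h : RestrictedIsometryOn A δ S) {z : E}
    (hz : z ∈ S) : |‖A z‖ ^ 2 - ‖z‖ ^ 2| ≤ δ * ‖z‖ ^ 2 :=
  abs_le.2 ⟨by linarith [(h z hz).1], by linarith [(h z hz).2]⟩

theorem abs_inner_map_sub_inner_le (h : RestrictedIsometryOn A δ (Submodule.span ℝ {x, y})) :
    |⟪A x, A y⟫_ℝ - ⟪x, y⟫_ℝ| ≤ δ * ‖x‖ * ‖y‖ := by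
  obtain rfl | hx := eq_or_ne x 0
  · simp
  obtain rfl | hy := eq_or_ne y 0
  · simp
  have hpos : 0 < 4 * (‖x‖ * ‖y‖) := by positivity
  -- Polarize at multiples of `x` and `y` that have equal norms.
  have hadd := h.abs_norm_sq_sub_norm_sq_le (z := ‖y‖ • x + ‖x‖ • y)
    (Submodule.mem_span_pair.2 ⟨_, _, rfl⟩)
  have hsub := h.abs_norm_sq_sub_norm_sq_le (z := ‖y‖ • x - ‖x‖ • y)
    (Submodule.mem_span_pair.2 ⟨‖y‖, -‖x‖, by rw [neg_smul, sub_eq_add_neg]⟩)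
  have hpolar : (‖A (‖y‖ • x + ‖x‖ • y)‖ ^ 2 - ‖‖y‖ • x + ‖x‖ • y‖ ^ 2)
      - (‖A (‖y‖ • x - ‖x‖ • y)‖ ^ 2 - ‖‖y‖ • x - ‖x‖ • y‖ ^ 2)
      = 4 * (‖x‖ * ‖y‖) * (⟪A x, A y⟫_ℝ - ⟪x, y⟫_ℝ) := by
    simp only [map_add, map_sub, map_smul, norm_add_sq_real, norm_sub_sq_real,
      real_inner_smul_left, real_inner_smul_right]
    ring
  have hpara : ‖‖y‖ • x + ‖x‖ • y‖ ^ 2 + ‖‖y‖ • x - ‖x‖ • y‖ ^ 2 = 4 * (‖x‖ * ‖y‖) ^ 2 := by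
    simp only [norm_add_sq_real, norm_sub_sq_real, norm_smul, norm_norm]
    ring
  refine le_of_mul_le_mul_left ?_ hpos
  calc 4 * (‖x‖ * ‖y‖) * |⟪A x, A y⟫_ℝ - ⟪x, y⟫_ℝ|
      = |4 * (‖x‖ * ‖y‖) * (⟪A x, A y⟫_ℝ - ⟪x, y⟫_ℝ)| := by rw [abs_mul, abs_of_pos hpos]
    _ ≤ δ * ‖‖y‖ • x + ‖x‖ • y‖ ^ 2 + δ * ‖‖y‖ • x - ‖x‖ • y‖ ^ 2 := by
        rw [← hpolar]
        exact (abs_sub _ _).trans (add_le_add hadd hsub)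
    _ = 4 * (‖x‖ * ‖y‖) * (δ * ‖x‖ * ‖y‖) := by rw [← mul_add, hpara]; ring

theorem norm_sub_le_of_norm_sub_le (hδ : 0 ≤ δ)
    (h : RestrictedIsometryOn A δ (Submodule.span ℝ {x, y})) {w : E}
    (hw : ∀ z, ⟪w, z⟫_ℝ = ⟪A x, A z⟫_ℝ) (hnear : ‖w - y‖ ≤ ‖w - x‖) : ‖y - x‖ ≤ 2 * δ * ‖x‖ := by
  obtain hd | hd := (norm_nonneg (y - x)).eq_or_lt
  · rw [← hd]
    positivity
  have hspan : Submodule.span ℝ {x, y - x} ≤ Submodule.span ℝ {x, y} :=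
    Submodule.span_le.2 <| Set.pair_subset (Submodule.mem_span_of_mem (by simp)) <|
      sub_mem (Submodule.mem_span_of_mem (by simp)) (Submodule.mem_span_of_mem (by simp))
  have hrip : ⟪w - x, y - x⟫_ℝ ≤ δ * ‖x‖ * ‖y - x‖ := by
    rw [inner_sub_left, hw]
    exact (le_abs_self _).trans
      (abs_inner_map_sub_inner_le fun z hz => h z (hspan hz))
  have hopt : ‖y - x‖ ^ 2 ≤ 2 * ⟪w - x, y - x⟫_ℝ := by
    have hsq := pow_le_pow_left₀ (norm_nonneg _) hnear 2
    rw [← sub_sub_sub_cancel_right w y x, norm_sub_sq_real] at hsq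
    linarith
  refine le_of_mul_le_mul_right ?_ hd
  linarith

end RestrictedIsometryOn

end RestrictedIsometry

section Rank

variable {R m n k l : Type*} [CommRing R] [Nontrivial R] [Fintype n] [Fintype k]
  [Fintype l]

lemma rank_le_of_mem_span_pair {A : Matrix m k R} {B : Matrix k n R} {C : Matrix m l R}
    {D : Matrix l n R} {M : Matrix m n R} (hM : M ∈ Submodule.span R {A * B, C * D}) :
    M.rank ≤ Fintype.card k + Fintype.card l := by
  obtain ⟨a, b, rfl⟩ := Submodule.mem_span_pair.1 hM
  rw [← Matrix.mul_smul, ← Matrix.mul_smul, ← fromCols_mul_fromRows, ← Fintype.card_sum]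
  exact (rank_mul_le_left _ _).trans (rank_le_card_width _)

end Rank

section DiagonalGram

variable {m n k : Type*} [DecidableEq k] {σ : k → ℝ}

lemma nonneg_of_transpose_mul_self_eq_diagonal [Fintype m] {A : Matrix m k ℝ}
    (h : Aᵀ * A = diagonal σ) (i : k) : 0 ≤ σ i := by
  rw [← diagonal_apply_eq σ i, ← h, mul_apply]
  exact Finset.sum_nonneg fun j _ => mul_self_nonneg (A j i)

variable [Fintype k]

lemma diagonal_sqrt_mul_self (hσ : ∀ i, 0 ≤ σ i) :
    diagonal (fun i => √(σ i)) * diagonal (fun i => √(σ i)) = diagonal σ := by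
  simp [diagonal_mul_diagonal, Real.mul_self_sqrt (hσ _)]

lemma transpose_mul_self_mul_diagonal_sqrt [Fintype m] {U : Matrix m k ℝ} (hU : Uᵀ * U = 1)
    (hσ : ∀ i, 0 ≤ σ i) :
    (U * diagonal (fun i => √(σ i)))ᵀ * (U * diagonal (fun i => √(σ i))) = diagonal σ := by
  rw [transpose_mul, diagonal_transpose, Matrix.mul_assoc, ← Matrix.mul_assoc Uᵀ, hU,
    Matrix.one_mul, diagonal_sqrt_mul_self hσ]

lemma mul_diagonal_sqrt_mul_transpose (U : Matrix m k ℝ) (V : Matrix n k ℝ)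
    (hσ : ∀ i, 0 ≤ σ i) :
    U * diagonal (fun i => √(σ i)) * (V * diagonal (fun i => √(σ i)))ᵀ = U * diagonal σ * Vᵀ := by
  rw [transpose_mul, diagonal_transpose, Matrix.mul_assoc, ← Matrix.mul_assoc (diagonal _),
    diagonal_sqrt_mul_self hσ, Matrix.mul_assoc]

end DiagonalGram

section Frobenius

open scoped InnerProductSpace Matrix.Norms.Frobenius

variable {m n : Type*} [Fintype m] [Fintype n]

/-- The inner product `⟨A, B⟩ = tr (Aᴴ B)`, which induces the Frobenius norm. It is a local instance
only, because Mathlib does not fix a norm on matrices. -/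
noncomputable abbrev frobeniusInnerProductSpace {𝕜 : Type*} [RCLike 𝕜] :
    InnerProductSpace 𝕜 (Matrix m n 𝕜) where
  inner A B := (Aᴴ * B).trace
  norm_sq_eq_re_inner A := by
    rw [frobenius_norm_def, ← Real.sqrt_eq_rpow, Real.sq_sqrt (by positivity), trace,
      Finset.sum_comm]
    simp only [diag_apply, mul_apply, conjTranspose_apply, map_sum, RCLike.star_def,
      RCLike.conj_mul, Real.rpow_two]
    norm_cast
  conj_inner_symm A B := by
    rw [starRingEnd_apply, ← trace_conjTranspose, conjTranspose_mul, conjTranspose_conjTranspose]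
  add_left A B C := by rw [conjTranspose_add, Matrix.add_mul, trace_add]
  smul_left A B c := by rw [conjTranspose_smul, Matrix.smul_mul, trace_smul]; rfl

attribute [local instance] frobeniusInnerProductSpace

lemma frobenius_inner_eq_trace (A B : Matrix m n ℝ) : ⟪A, B⟫_ℝ = (Aᵀ * B).trace := rfl

lemma frobenius_inner_eq_sum (A B : Matrix m n ℝ) : ⟪A, B⟫_ℝ = ∑ i, ∑ j, A i j * B i j := by
  rw [frobenius_inner_eq_trace, trace, Finset.sum_comm]
  simp [mul_apply]

lemma frob_eq_frobenius_norm {n₁ n₂ : ℕ} (A : Matrix (Fin n₁) (Fin n₂) ℝ) : frob A = ‖A‖ := by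
  simp [frob, frobenius_norm_def, Real.sqrt_eq_rpow]

section Gram

variable {k l : Type*} [Fintype k] [Fintype l]

lemma frobenius_inner_mul_transpose (A : Matrix m k ℝ) (B : Matrix n k ℝ) (C : Matrix m l ℝ)
    (D : Matrix n l ℝ) : ⟪A * Bᵀ, C * Dᵀ⟫_ℝ = ⟪Cᵀ * A, Dᵀ * B⟫_ℝ := by
  simp only [frobenius_inner_eq_trace, transpose_mul, transpose_transpose]
  rw [Matrix.mul_assoc, trace_mul_comm]
  simp only [Matrix.mul_assoc]

lemma frobenius_norm_sq_mul_transpose (A : Matrix m k ℝ) (B : Matrix n k ℝ) :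
    ‖A * Bᵀ‖ ^ 2 = ⟪Aᵀ * A, Bᵀ * B⟫_ℝ := by
  rw [← real_inner_self_eq_norm_sq, frobenius_inner_mul_transpose]

lemma frobenius_norm_sq_mul_transpose_sub (A : Matrix m k ℝ) (B : Matrix n k ℝ)
    (C : Matrix m l ℝ) (D : Matrix n l ℝ) :
    ‖A * Bᵀ - C * Dᵀ‖ ^ 2 = ⟪Aᵀ * A, Bᵀ * B⟫_ℝ - 2 * ⟪Cᵀ * A, Dᵀ * B⟫_ℝ + ⟪Cᵀ * C, Dᵀ * D⟫_ℝ := by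
  rw [norm_sub_sq_real, frobenius_norm_sq_mul_transpose, frobenius_norm_sq_mul_transpose,
    frobenius_inner_mul_transpose]

lemma frobenius_inner_transpose_mul_self_nonneg {S : Matrix n n ℝ} (hS : S.PosSemidef)
    (A : Matrix m n ℝ) : 0 ≤ ⟪Aᵀ * A, S⟫_ℝ := by
  have := (hS.mul_mul_conjTranspose_same A).trace_nonneg
  rwa [conjTranspose_eq_transpose_of_trivial, trace_mul_cycle, ← transpose_transpose A,
    ← transpose_mul, ← frobenius_inner_eq_trace, transpose_transpose] at this

end Gram

theorem frobenius_norm_sq_sub_mul_transpose_le {F G : Matrix m n ℝ} (h : (Gᵀ * F).PosSemidef) :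
    2 * (√2 - 1) * ‖(F - G) * Gᵀ‖ ^ 2 ≤ ‖F * Fᵀ - G * Gᵀ‖ ^ 2 := by
  set S := Gᵀ * F with hS
  set B := Gᵀ * G with hB
  set K := (F - G)ᵀ * (F - G) with hK
  have hsymm : Fᵀ * G = S := by
    simpa [hS] using h.isHermitian.eq
  have hFF : Fᵀ * F = K + (2 : ℝ) • S - B := by
    rw [hK, transpose_sub, Matrix.sub_mul, Matrix.mul_sub, Matrix.mul_sub, hsymm, ← hS, ← hB,
      two_smul]
    abel
  have hKS : 0 ≤ ⟪K, S⟫_ℝ := frobenius_inner_transpose_mul_self_nonneg h (F - G)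
  have hsqrt : √2 ^ 2 = 2 := Real.sq_sqrt zero_le_two
  have hsqrt_le : √2 ≤ 2 := Real.sqrt_le_iff.2 ⟨by norm_num, by norm_num⟩
  -- Completing the square in `K`; the weight `√2` is what makes the `S` and `B` terms cancel.
  have hexpand : ‖F * Fᵀ - G * Gᵀ‖ ^ 2 = ‖K + √2 • (S - B)‖ ^ 2 + 2 * (2 - √2) * ⟪K, S⟫_ℝ
      + 2 * (√2 - 1) * ⟪K, B⟫_ℝ := by
    rw [frobenius_norm_sq_mul_transpose_sub, ← hS, ← hB, hFF]
    simp only [← real_inner_self_eq_norm_sq, inner_add_left, inner_add_right, inner_sub_left,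
      inner_sub_right, real_inner_smul_left, real_inner_smul_right, real_inner_comm K,
      real_inner_comm S B]
    linear_combination (-⟪S, S⟫_ℝ + 2 * ⟪S, B⟫_ℝ - ⟪B, B⟫_ℝ) * hsqrt
  rw [hexpand, frobenius_norm_sq_mul_transpose]
  linarith [sq_nonneg ‖K + √2 • (S - B)‖, mul_nonneg (sub_nonneg.2 hsqrt_le) hKS]

section Balanced

variable {k l : Type*} [Fintype k] [Fintype l]

theorem frobenius_norm_fromRows_mul_transpose_sub_le {L : Matrix m k ℝ} {R : Matrix n k ℝ}
    {L' : Matrix m l ℝ} {R' : Matrix n l ℝ} (h : Lᵀ * L = Rᵀ * R) (h' : L'ᵀ * L' = R'ᵀ * R') :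
    ‖fromRows L R * (fromRows L R)ᵀ - fromRows L' R' * (fromRows L' R')ᵀ‖
      ≤ 2 * ‖L * Rᵀ - L' * R'ᵀ‖ := by
  refine (sq_le_sq₀ (norm_nonneg _) (by positivity)).1 ?_
  -- The squares of the two sides differ by `2 ‖L'ᵀ * L - R'ᵀ * R‖ ^ 2`.
  have hcross := norm_sub_sq_real (L'ᵀ * L) (R'ᵀ * R)
  rw [mul_pow, frobenius_norm_sq_mul_transpose_sub, frobenius_norm_sq_mul_transpose_sub]
  simp only [transpose_fromRows, fromCols_mul_fromRows, h, h', inner_add_left, inner_add_right,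
    real_inner_self_eq_norm_sq, real_inner_comm (L'ᵀ * L)]
  linarith [sq_nonneg ‖L'ᵀ * L - R'ᵀ * R‖]

variable [DecidableEq k] {σ : k → ℝ}

lemma frobenius_norm_sq_mul_diagonal_sqrt (hσ : ∀ i, 0 ≤ σ i) (A : Matrix m k ℝ) :
    ‖A * diagonal (fun i => √(σ i))‖ ^ 2 = ⟪Aᵀ * A, diagonal σ⟫_ℝ := by
  rw [← diagonal_sqrt_mul_self hσ, ← diagonal_transpose (fun i => √(σ i)),
    frobenius_norm_sq_mul_transpose, diagonal_transpose]

theorem frobenius_norm_sq_sub_mul_diagonal_sqrt_le {L Ls : Matrix m k ℝ} {R Rs : Matrix n k ℝ}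
    (h : Lᵀ * L = Rᵀ * R) (hLs : Lsᵀ * Ls = diagonal σ) (hRs : Rsᵀ * Rs = diagonal σ)
    (hpos : ((fromRows Ls Rs)ᵀ * fromRows L R).PosSemidef) :
    ‖(L - Ls) * diagonal (fun i => √(σ i))‖ ^ 2 + ‖(R - Rs) * diagonal (fun i => √(σ i))‖ ^ 2
      ≤ (√2 + 1) * ‖L * Rᵀ - Ls * Rsᵀ‖ ^ 2 := by
  have hσ := nonneg_of_transpose_mul_self_eq_diagonal hLs
  have hsub : fromRows L R - fromRows Ls Rs = fromRows (L - Ls) (R - Rs) := by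
    ext (i | i) j <;> rfl
  have hgram : ‖(fromRows L R - fromRows Ls Rs) * (fromRows Ls Rs)ᵀ‖ ^ 2 =
      2 * (‖(L - Ls) * diagonal (fun i => √(σ i))‖ ^ 2 +
        ‖(R - Rs) * diagonal (fun i => √(σ i))‖ ^ 2) := by
    rw [frobenius_norm_sq_mul_transpose, hsub, frobenius_norm_sq_mul_diagonal_sqrt hσ,
      frobenius_norm_sq_mul_diagonal_sqrt hσ, ← inner_add_left]
    simp only [transpose_fromRows, fromCols_mul_fromRows, hLs, hRs, inner_add_right]
    ring
  have hproc := frobenius_norm_sq_sub_mul_transpose_le hpos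
  have hbal := pow_le_pow_left₀ (norm_nonneg _)
    (frobenius_norm_fromRows_mul_transpose_sub_le h (hLs.trans hRs.symm)) 2
  rw [hgram] at hproc
  have hsqrt : (√2 + 1) * (√2 - 1) = 1 := by
    linear_combination Real.sq_sqrt (zero_le_two (α := ℝ))
  refine le_of_mul_le_mul_left (a := √2 - 1) ?_ (sub_pos.2 Real.one_lt_sqrt_two)
  linear_combination (hproc + hbal) / 4 - ‖L * Rᵀ - Ls * Rsᵀ‖ ^ 2 * hsqrt

lemma frobenius_norm_mul_transpose_le {L : Matrix m k ℝ} {R : Matrix n k ℝ}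
    (hL : Lᵀ * L = diagonal σ) (hR : Rᵀ * R = diagonal σ) {s : ℝ} (hs : ∀ i, σ i ≤ s) :
    ‖L * Rᵀ‖ ≤ √(Fintype.card k) * s := by
  have hσ := nonneg_of_transpose_mul_self_eq_diagonal hL
  obtain _ | ⟨⟨i₀⟩⟩ := isEmpty_or_nonempty k
  · have hLR : L * Rᵀ = 0 := by ext; simp [mul_apply]
    simp [hLR]
  have hs₀ : 0 ≤ s := (hσ i₀).trans (hs i₀)
  refine (sq_le_sq₀ (norm_nonneg _) (by positivity)).1 ?_
  calc ‖L * Rᵀ‖ ^ 2 = ∑ i, σ i * σ i := by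
        rw [frobenius_norm_sq_mul_transpose, hL, hR, frobenius_inner_eq_trace, diagonal_transpose,
          diagonal_mul_diagonal, trace_diagonal]
    _ ≤ ∑ _i : k, s * s :=
        Finset.sum_le_sum fun i _ => mul_le_mul (hs i) (hs i) (hσ i) hs₀
    _ = (√(Fintype.card k) * s) ^ 2 := by
        rw [Finset.sum_const, Finset.card_univ, nsmul_eq_mul, mul_pow,
          Real.sq_sqrt (Nat.cast_nonneg _), sq]

end Balanced

end Frobenius

section ScaledDistance

variable {n₁ n₂ r : ℕ} {L Ls : Matrix (Fin n₁) (Fin r) ℝ} {R Rs : Matrix (Fin n₂) (Fin r) ℝ}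
  {σ : Fin r → ℝ}

lemma distF_le_of_isUnit {Q : Matrix (Fin r) (Fin r) ℝ} (hQ : IsUnit Q) :
    distF L R Ls Rs σ ≤ √(frob ((L * Q - Ls) * diagonal (fun i => √(σ i))) ^ 2 +
      frob ((R * (Q⁻¹)ᵀ - Rs) * diagonal (fun i => √(σ i))) ^ 2) :=
  csInf_le ⟨0, by rintro _ ⟨_, _, rfl⟩; positivity⟩ ⟨Q, hQ, rfl⟩

theorem distF_le_of_balanced (h : Lᵀ * L = Rᵀ * R) (hLs : Lsᵀ * Ls = diagonal σ)
    (hRs : Rsᵀ * Rs = diagonal σ) :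
    distF L R Ls Rs σ ≤ √(√2 + 1) * frob (L * Rᵀ - Ls * Rsᵀ) := by
  obtain ⟨Q, hQ, hpos⟩ := exists_mem_unitaryGroup_mul_posSemidef ((fromRows Ls Rs)ᵀ * fromRows L R)
  have hQQ : Q * Qᵀ = 1 := mem_unitaryGroup_iff.1 hQ
  have hinv : (Q⁻¹)ᵀ = Q := by rw [inv_eq_right_inv hQQ, transpose_transpose]
  have hgram {n : ℕ} (A : Matrix (Fin n) (Fin r) ℝ) : (A * Q)ᵀ * (A * Q) = Qᵀ * (Aᵀ * A) * Q := by
    simp only [transpose_mul, Matrix.mul_assoc]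
  have hbal : (L * Q)ᵀ * (L * Q) = (R * Q)ᵀ * (R * Q) := by rw [hgram, hgram, h]
  have hprod : L * Q * (R * Q)ᵀ = L * Rᵀ := by
    rw [transpose_mul, Matrix.mul_assoc, ← Matrix.mul_assoc Q, hQQ, Matrix.one_mul]
  rw [Matrix.mul_assoc, fromRows_mul] at hpos
  calc distF L R Ls Rs σ
      ≤ √(frob ((L * Q - Ls) * diagonal (fun i => √(σ i))) ^ 2 +
          frob ((R * Q - Rs) * diagonal (fun i => √(σ i))) ^ 2) := by
        simpa only [hinv] using distF_le_of_isUnit (.of_mul_eq_one _ hQQ)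
    _ ≤ √((√2 + 1) * frob (L * Rᵀ - Ls * Rsᵀ) ^ 2) := by
        simp only [frob_eq_frobenius_norm, ← hprod]
        exact Real.sqrt_le_sqrt (frobenius_norm_sq_sub_mul_diagonal_sqrt_le hbal hLs hRs hpos)
    _ = √(√2 + 1) * frob (L * Rᵀ - Ls * Rsᵀ) := by
        rw [Real.sqrt_mul (by positivity), frob, Real.sqrt_sq (Real.sqrt_nonneg _)]

end ScaledDistance

section Sensing

open scoped Matrix.Norms.Frobenius

attribute [local instance] frobeniusInnerProductSpace

variable {n₁ n₂ m r : ℕ} {𝓐 : Matrix (Fin n₁) (Fin n₂) ℝ →ₗ[ℝ] (Fin m → ℝ)} {δ : ℝ}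
  {Aadj : (Fin m → ℝ) → Matrix (Fin n₁) (Fin n₂) ℝ}

theorem frob_mul_transpose_sub_le_of_rip (hδ : 0 ≤ δ)
    (hRIP : ∀ M : Matrix (Fin n₁) (Fin n₂) ℝ, M.rank ≤ 2 * r →
      (1 - δ) * frob M ^ 2 ≤ ∑ k, 𝓐 M k ^ 2 ∧ ∑ k, 𝓐 M k ^ 2 ≤ (1 + δ) * frob M ^ 2)
    (hAadj : ∀ y M, ∑ i, ∑ j, Aadj y i j * M i j = ∑ k, y k * 𝓐 M k)
    {L Ls : Matrix (Fin n₁) (Fin r) ℝ} {R Rs : Matrix (Fin n₂) (Fin r) ℝ}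
    (hnear : frob (Aadj (𝓐 (Ls * Rsᵀ)) - L * Rᵀ) ≤ frob (Aadj (𝓐 (Ls * Rsᵀ)) - Ls * Rsᵀ)) :
    frob (L * Rᵀ - Ls * Rsᵀ) ≤ 2 * δ * frob (Ls * Rsᵀ) := by
  simp only [frob_eq_frobenius_norm] at hRIP hnear ⊢
  let A : Matrix (Fin n₁) (Fin n₂) ℝ →ₗ[ℝ] EuclideanSpace ℝ (Fin m) :=
    (WithLp.linearEquiv 2 ℝ (Fin m → ℝ)).symm ∘ₗ 𝓐
  have hA (M : Matrix (Fin n₁) (Fin n₂) ℝ) : ‖A M‖ ^ 2 = ∑ k, 𝓐 M k ^ 2 := by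
    simp [A, EuclideanSpace.norm_sq_eq]
  have hrip : RestrictedIsometryOn A δ (Submodule.span ℝ {Ls * Rsᵀ, L * Rᵀ}) := fun M hM => by
    rw [hA]
    exact hRIP M <| (rank_le_of_mem_span_pair hM).trans_eq (by rw [Fintype.card_fin, two_mul])
  refine hrip.norm_sub_le_of_norm_sub_le hδ (fun M => ?_) hnear
  rw [frobenius_inner_eq_sum, hAadj]
  simp [A, PiLp.inner_apply, mul_comm]

theorem spectral_init_matrix_sensing_general (hδ : 0 ≤ δ)
    (hRIP : ∀ M : Matrix (Fin n₁) (Fin n₂) ℝ, M.rank ≤ 2 * r →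
      (1 - δ) * frob M ^ 2 ≤ ∑ k, 𝓐 M k ^ 2 ∧ ∑ k, 𝓐 M k ^ 2 ≤ (1 + δ) * frob M ^ 2)
    (hAadj : ∀ y M, ∑ i, ∑ j, Aadj y i j * M i j = ∑ k, y k * 𝓐 M k)
    {L₀ Ls : Matrix (Fin n₁) (Fin r) ℝ} {R₀ Rs : Matrix (Fin n₂) (Fin r) ℝ} {σ : Fin r → ℝ}
    (hLs : Lsᵀ * Ls = diagonal σ) (hRs : Rsᵀ * Rs = diagonal σ) {s : ℝ} (hs : ∀ i, σ i ≤ s)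
    (hbal : L₀ᵀ * L₀ = R₀ᵀ * R₀)
    (hnear : frob (Aadj (𝓐 (Ls * Rsᵀ)) - L₀ * R₀ᵀ) ≤ frob (Aadj (𝓐 (Ls * Rsᵀ)) - Ls * Rsᵀ)) :
    distF L₀ R₀ Ls Rs σ ≤ 5 * δ * √r * s := by
  have hnorm : frob (Ls * Rsᵀ) ≤ √r * s := by
    simpa [frob_eq_frobenius_norm] using frobenius_norm_mul_transpose_le hLs hRs hs
  have hsqrt : √(√2 + 1) ≤ 5 / 2 :=
    Real.sqrt_le_iff.2 ⟨by norm_num, by linarith [Real.sqrt_two_lt_three_halves]⟩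
  calc distF L₀ R₀ Ls Rs σ
      ≤ √(√2 + 1) * frob (L₀ * R₀ᵀ - Ls * Rsᵀ) := distF_le_of_balanced hbal hLs hRs
    _ ≤ 5 / 2 * (2 * δ * (√r * s)) := by
        refine mul_le_mul hsqrt ?_ (Real.sqrt_nonneg _) (by norm_num)
        exact (frob_mul_transpose_sub_le_of_rip hδ hRIP hAadj hnear).trans (by gcongr)
    _ = 5 * δ * √r * s := by ring

end Sensing

/-- Spectral initialization guarantee for low-rank matrix sensing: if the measurement map `𝓐`
satisfies the rank-`2r` RIP with constant `δ`, and `L₀ = U₀ Σ₀^{1/2}`, `R₀ = V₀ Σ₀^{1/2}` come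
from the best rank-`r` approximation `U₀ Σ₀ V₀ᵀ` of `𝓐*(𝓐(X_star))`, then
`dist(F₀, F_star) ≤ 5 δ √r κ σ_r(X_star)`. -/
theorem spectral_init_matrix_sensing {n₁ n₂ m r : ℕ} (hr : 0 < r)
    (Xstar : Matrix (Fin n₁) (Fin n₂) ℝ)
    (Ustar : Matrix (Fin n₁) (Fin r) ℝ) (Vstar : Matrix (Fin n₂) (Fin r) ℝ)
    (σ : Fin r → ℝ) (hU : Ustarᵀ * Ustar = 1) (hV : Vstarᵀ * Vstar = 1)
    (hσ : ∀ i, 0 < σ i) (hsort : Antitone σ)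
    (hX : Xstar = Ustar * Matrix.diagonal σ * Vstarᵀ)
    (Lstar : Matrix (Fin n₁) (Fin r) ℝ) (Rstar : Matrix (Fin n₂) (Fin r) ℝ)
    (hLstar : Lstar = Ustar * Matrix.diagonal (fun i => Real.sqrt (σ i)))
    (hRstar : Rstar = Vstar * Matrix.diagonal (fun i => Real.sqrt (σ i)))
    (κ : ℝ) (hκ : κ = σ ⟨0, hr⟩ / σ ⟨r - 1, Nat.sub_lt hr one_pos⟩)
    (𝓐 : Matrix (Fin n₁) (Fin n₂) ℝ →ₗ[ℝ] (Fin m → ℝ))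
    (δ : ℝ) (hδ0 : 0 ≤ δ) (hδ1 : δ < 1)
    (hRIP : ∀ M : Matrix (Fin n₁) (Fin n₂) ℝ, M.rank ≤ 2 * r →
      (1 - δ) * (frob M) ^ 2 ≤ ∑ k, (𝓐 M k) ^ 2 ∧
      ∑ k, (𝓐 M k) ^ 2 ≤ (1 + δ) * (frob M) ^ 2)
    (Aadj : (Fin m → ℝ) → Matrix (Fin n₁) (Fin n₂) ℝ)
    (hAadj : ∀ (y : Fin m → ℝ) (M : Matrix (Fin n₁) (Fin n₂) ℝ),
      ∑ i, ∑ j, Aadj y i j * M i j = ∑ k, y k * 𝓐 M k)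
    (U₀ : Matrix (Fin n₁) (Fin r) ℝ) (σ₀ : Fin r → ℝ) (V₀ : Matrix (Fin n₂) (Fin r) ℝ)
    (hU₀ : U₀ᵀ * U₀ = 1) (hV₀ : V₀ᵀ * V₀ = 1) (hσ₀ : ∀ i, 0 ≤ σ₀ i)
    (hbest : ∀ Z : Matrix (Fin n₁) (Fin n₂) ℝ, Z.rank ≤ r →
      frob (Aadj (𝓐 Xstar) - U₀ * Matrix.diagonal σ₀ * V₀ᵀ) ≤ frob (Aadj (𝓐 Xstar) - Z))
    (L₀ : Matrix (Fin n₁) (Fin r) ℝ) (R₀ : Matrix (Fin n₂) (Fin r) ℝ)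
    (hL₀ : L₀ = U₀ * Matrix.diagonal (fun i => Real.sqrt (σ₀ i)))
    (hR₀ : R₀ = V₀ * Matrix.diagonal (fun i => Real.sqrt (σ₀ i))) :
    distF L₀ R₀ Lstar Rstar σ ≤
      5 * δ * Real.sqrt r * κ * σ ⟨r - 1, Nat.sub_lt hr one_pos⟩ := by
  subst hX hLstar hRstar hL₀ hR₀
  have hσ' (i : Fin r) : 0 ≤ σ i := (hσ i).le
  have hmax (i : Fin r) : σ i ≤ κ * σ ⟨r - 1, Nat.sub_lt hr one_pos⟩ := by
    rw [hκ, div_mul_cancel₀ _ (hσ _).ne']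
    exact hsort (Nat.zero_le i)
  rw [mul_assoc _ κ]
  refine spectral_init_matrix_sensing_general hδ0 hRIP hAadj
    (transpose_mul_self_mul_diagonal_sqrt hU hσ') (transpose_mul_self_mul_diagonal_sqrt hV hσ') hmax
    ((transpose_mul_self_mul_diagonal_sqrt hU₀ hσ₀).trans
      (transpose_mul_self_mul_diagonal_sqrt hV₀ hσ₀).symm) ?_
  simp only [mul_diagonal_sqrt_mul_transpose _ _ hσ', mul_diagonal_sqrt_mul_transpose _ _ hσ₀]
  refine hbest _ ?_
  rw [Matrix.mul_assoc]
  exact (rank_mul_le_left _ _).trans ((rank_le_card_width _).trans_eq (Fintype.card_fin r))
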